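/- The inertia of the resistance matrix R is (s, ns − s, 0); that is, R has exactly s positive eigenvalues, exactly ns − s negative eigenvalues, and no zero eigenvalue (counted with multiplicity). -/

import Mathlib

open Matrix Finset
open scoped Kronecker

noncomputable section

/-- The `ns × s` matrix `1 ⊗ Iₛ`, where `1` is the all-ones column vector. -/
def oneKron (n s : ℕ) : Matrix (Fin n × Fin s) (Fin s) ℝ :=
  Matrix.of fun p b => if p.2 = b then 1 else 0

/-- The `ns × ns` matrix `J ⊗ Iₛ`, where `J` is the all-ones matrix. -/
def JKron (n s : ℕ) : Matrix (Fin n × Fin s) (Fin n × Fin s) ℝ :=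
  (Matrix.of fun _ _ : Fin n => (1 : ℝ)) ⊗ₖ (1 : Matrix (Fin s) (Fin s) ℝ)

/-- The Laplacian matrix of a graph whose edges `{i,j}` are weighted by
positive definite `s × s` matrices `W i j`: the `(i,i)` block is
`Σ_{j ∼ i} (W i j)⁻¹`, the `(i,j)` block for `i ≠ j` is `-(W i j)⁻¹` if `i ∼ j`
and `0` otherwise. -/
def lap {n s : ℕ} (G : SimpleGraph (Fin n)) [DecidableRel G.Adj]
    (W : Fin n → Fin n → Matrix (Fin s) (Fin s) ℝ) :
    Matrix (Fin n × Fin s) (Fin n × Fin s) ℝ :=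
  Matrix.of fun p q =>
    if p.1 = q.1 then (∑ k ∈ univ.filter (fun k => G.Adj p.1 k), (W p.1 k)⁻¹) p.2 q.2
    else if G.Adj p.1 q.1 then -((W p.1 q.1)⁻¹ p.2 q.2) else 0

/-- The four Penrose conditions: `Adag` is a Moore–Penrose inverse of `A`. -/
def IsMoorePenrose {m : Type*} [Fintype m] (A Adag : Matrix m m ℝ) : Prop :=
  A * Adag * A = A ∧ Adag * A * Adag = Adag ∧ (A * Adag)ᵀ = A * Adag ∧ (Adag * A)ᵀ = Adag * A

/-- The `s × s` block of an `ns × ns` matrix in block position `(i, j)`. -/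
def blk {n s : ℕ} (A : Matrix (Fin n × Fin s) (Fin n × Fin s) ℝ) (i j : Fin n) :
    Matrix (Fin s) (Fin s) ℝ :=
  Matrix.of fun a b => A (i, a) (j, b)

/-- The resistance matrix built from a Moore–Penrose inverse `Ldag` of the Laplacian:
its `(i,j)` block is `K_{ii} + K_{jj} - 2 K_{ij}`, where `K_{ij}` are the blocks of `Ldag`. -/
def resist {n s : ℕ} (Ldag : Matrix (Fin n × Fin s) (Fin n × Fin s) ℝ) :
    Matrix (Fin n × Fin s) (Fin n × Fin s) ℝ :=
  Matrix.of fun p q =>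
    Ldag (p.1, p.2) (p.1, q.2) + Ldag (q.1, p.2) (q.1, q.2) - 2 * Ldag p q

/-- The `ns × s` matrix `τ`, whose `i`-th block is `2 Iₛ - Σ_{j ∼ i} (W i j)⁻¹ R_{ji}`. -/
def tauMat {n s : ℕ} (G : SimpleGraph (Fin n)) [DecidableRel G.Adj]
    (W : Fin n → Fin n → Matrix (Fin s) (Fin s) ℝ)
    (R : Matrix (Fin n × Fin s) (Fin n × Fin s) ℝ) :
    Matrix (Fin n × Fin s) (Fin s) ℝ :=
  Matrix.of fun p b =>
    ((2 : ℝ) • (1 : Matrix (Fin s) (Fin s) ℝ) -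
      ∑ j ∈ univ.filter (fun j => G.Adj p.1 j), (W p.1 j)⁻¹ * blk R j p.1) p.2 b

/-- The block diagonal matrix `X̄` with the same diagonal blocks as `X`. -/
def bdiag {n s : ℕ} (X : Matrix (Fin n × Fin s) (Fin n × Fin s) ℝ) :
    Matrix (Fin n × Fin s) (Fin n × Fin s) ℝ :=
  Matrix.of fun p q => if p.1 = q.1 then X (p.1, p.2) (p.1, q.2) else 0

/-!
The argument rests on the conditional positive definiteness of `K = L†`: `x ⬝ K x > 0` for every
nonzero `x` whose blocks sum to `0`. It holds because such an `x` is orthogonal to the null space of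
`L`, hence is of the form `L y`, and `x ⬝ K x = y ⬝ L K L y = y ⬝ L y`.

On vectors whose blocks sum to `0` the quadratic form of `R` is `-2` times that of `K`, hence
negative definite on a subspace of dimension `ns - s`. On the complementary subspace of vectors
`1 ⊗ c` it is the sum over all pairs `(i, j)` of the values of the form of `K` at `(eᵢ - eⱼ) ⊗ c`,
hence positive definite on a subspace of dimension `s`. By Sylvester's law of inertia these
dimensions count the eigenvalues.
-/

section Sylvester

theorem signature_eq_of_definite_subspaces {𝕜 M : Type*} [Field 𝕜] [LinearOrder 𝕜]
    [IsStrictOrderedRing 𝕜] [AddCommGroup M] [Module 𝕜 M] [FiniteDimensional 𝕜 M]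
    {Q : QuadraticForm 𝕜 M} {V W : Submodule 𝕜 M} (hV : (Q.restrict V).PosDef)
    (hW : ((-Q).restrict W).PosDef)
    (hVW : Module.finrank 𝕜 V + Module.finrank 𝕜 W = Module.finrank 𝕜 M) :
    sigPos Q = Module.finrank 𝕜 V ∧ sigNeg Q = Module.finrank 𝕜 W ∧
      Module.finrank 𝕜 Q.radical = 0 := by
  have hpos := le_sigPos_of_posDef Q hV
  have hneg := le_sigNeg_of_negDef Q hW
  have htotal := QuadraticForm.sigPos_add_sigNeg_add_radical (Q := Q)
  omega

variable {m : Type*} [Fintype m] [DecidableEq m]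

theorem toQuadraticForm'_apply {R : Type*} [CommRing R] (A : Matrix m m R) (x : m → R) :
    A.toQuadraticForm' x = x ⬝ᵥ A *ᵥ x := by
  simp [toQuadraticForm', toLinearMap₂'_apply']

variable {A : Matrix m m ℝ} (hA : A.IsHermitian)

theorem equivalent_weightedSumSquares_eigenvalues :
    A.toQuadraticForm'.Equivalent (QuadraticMap.weightedSumSquares ℝ hA.eigenvalues) := by
  set U := hA.eigenvectorUnitary
  have hspectral : A = U * diagonal hA.eigenvalues * (U : Matrix m m ℝ)ᵀ := by
    simpa [Unitary.conjStarAlgAut_apply, star_eq_conjTranspose, Function.comp_def]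
      using hA.spectral_theorem
  refine ⟨⟨UnitaryGroup.toLinearEquiv (star U), fun x => ?_⟩⟩
  change QuadraticMap.weightedSumSquares ℝ hA.eigenvalues ((U : Matrix m m ℝ)ᵀ *ᵥ x) = _
  rw [toQuadraticForm'_apply]
  conv_rhs => rw [hspectral]
  rw [← mulVec_mulVec, ← mulVec_mulVec, dotProduct_mulVec, ← mulVec_transpose,
    QuadraticMap.weightedSumSquares_apply, dotProduct]
  exact sum_congr rfl fun i _ => by rw [mulVec_diagonal, smul_eq_mul]; ring

theorem sigPos_eq_card_eigenvalues_pos :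
    sigPos A.toQuadraticForm' = #{i | 0 < hA.eigenvalues i} := by
  rw [QuadraticForm.sigPos_of_equiv_weightedSumSquares
    (equivalent_weightedSumSquares_eigenvalues hA), Set.ncard_eq_toFinset_card']
  simp

theorem sigNeg_eq_card_eigenvalues_neg :
    sigNeg A.toQuadraticForm' = #{i | hA.eigenvalues i < 0} := by
  rw [QuadraticForm.sigNeg_of_equiv_weightedSumSquares
    (equivalent_weightedSumSquares_eigenvalues hA), Set.ncard_eq_toFinset_card']
  simp

theorem finrank_radical_eq_card_eigenvalues_zero :
    Module.finrank ℝ A.toQuadraticForm'.radical = #{i | hA.eigenvalues i = 0} := by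
  rw [QuadraticForm.finrank_radical_of_equiv_weightedSumSquares
    (equivalent_weightedSumSquares_eigenvalues hA), Set.ncard_eq_toFinset_card']
  simp

end Sylvester

section GeneralizedInverse

variable {m : Type*} [Fintype m] {A K : Matrix m m ℝ}

theorem dotProduct_mulVec_pos_of_mul_mul_self (hA : A.PosSemidef) (hAK : A * K * A = A)
    {y : m → ℝ} (hy : A *ᵥ y ≠ 0) : 0 < (A *ᵥ y) ⬝ᵥ K *ᵥ (A *ᵥ y) := by
  have hAt : Aᵀ = A := by simpa using hA.1.eq
  have hform : (A *ᵥ y) ⬝ᵥ K *ᵥ (A *ᵥ y) = y ⬝ᵥ A *ᵥ y := by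
    nth_rw 1 [← vecMul_transpose]
    rw [hAt, ← dotProduct_mulVec, mulVec_mulVec, mulVec_mulVec, hAK]
  have hnonneg : 0 ≤ y ⬝ᵥ A *ᵥ y := by simpa using hA.dotProduct_mulVec_nonneg y
  rw [hform]
  exact hnonneg.lt_of_ne' fun h => hy ((hA.dotProduct_mulVec_zero_iff y).1 (by simpa using h))

theorem IsMoorePenrose.exists_mulVec_eq_of_orthogonal_ker (hA : A.IsSymm) (h : IsMoorePenrose A K)
    {x : m → ℝ} (hx : ∀ v, A *ᵥ v = 0 → x ⬝ᵥ v = 0) : ∃ y, A *ᵥ y = x := by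
  obtain ⟨hAKA, -, -, hKA⟩ := h
  set v := x - (K * A) *ᵥ x with hv
  have hAv : A *ᵥ v = 0 := by
    rw [hv, mulVec_sub, mulVec_mulVec, ← Matrix.mul_assoc, hAKA, sub_self]
  have hKAv : ((K * A) *ᵥ x) ⬝ᵥ v = 0 := by
    rw [← vecMul_transpose, hKA, ← dotProduct_mulVec, ← mulVec_mulVec, hAv, mulVec_zero,
      dotProduct_zero]
  have hv0 : v = 0 := by
    rw [← dotProduct_self_eq_zero]
    nth_rw 1 [hv]
    rw [sub_dotProduct, hx v hAv, hKAv, sub_zero]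
  refine ⟨Kᵀ *ᵥ x, ?_⟩
  rw [mulVec_mulVec]
  nth_rw 1 [← hA.eq]
  rw [← transpose_mul, hKA]
  exact (sub_eq_zero.1 hv0).symm

end GeneralizedInverse

theorem rank_add_finrank_ker_vecMulLinear {𝕜 m k : Type*} [Field 𝕜] [Fintype m] [Fintype k]
    (B : Matrix m k 𝕜) :
    B.rank + Module.finrank 𝕜 (LinearMap.ker B.vecMulLinear) = Fintype.card m := by
  rw [← rank_transpose, rank, mulVecLin_transpose, LinearMap.finrank_range_add_finrank_ker,
    Module.finrank_fintype_fun_eq_card]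

section Blocks

variable {n s : ℕ}

/-- The block vector `eᵢ ⊗ c`, with `i`-th block `c` and all other blocks `0`. The vectors
`eᵢ ⊗ c` detect the `s × s` blocks of a matrix. -/
def blockSingle (i : Fin n) (c : Fin s → ℝ) : Fin n × Fin s → ℝ :=
  Function.uncurry (Pi.single i c)

theorem blockSingle_dotProduct_mulVec (M : Matrix (Fin n × Fin s) (Fin n × Fin s) ℝ)
    (i j : Fin n) (c d : Fin s → ℝ) :
    blockSingle i c ⬝ᵥ M *ᵥ blockSingle j d = c ⬝ᵥ blk M i j *ᵥ d := by
  simp [dotProduct, mulVec, blk, blockSingle, Function.uncurry, Fintype.sum_prod_type,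
    Pi.single_apply, ite_apply]

theorem blockSingle_vecMul_oneKron (i : Fin n) (c : Fin s → ℝ) :
    blockSingle i c ᵥ* oneKron n s = c := by
  ext a
  simp [blockSingle, Function.uncurry, oneKron, vecMul, dotProduct, Fintype.sum_prod_type,
    Pi.single_apply, ite_apply]

theorem oneKron_mulVec (c : Fin s → ℝ) : oneKron n s *ᵥ c = ∑ i, blockSingle i c := by
  ext p
  simp [blockSingle, Function.uncurry, oneKron, mulVec, dotProduct, Pi.single_apply, ite_apply]

theorem rank_oneKron [Nonempty (Fin n)] : (oneKron n s).rank = s := by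
  have hinj : Function.Injective (oneKron n s).mulVecLin := fun c d h => by
    simpa [oneKron, mulVec, dotProduct, funext_iff] using h
  rw [rank, LinearMap.finrank_range_of_inj hinj, Module.finrank_fin_fun]

theorem JKron_eq_oneKron_mul_transpose : JKron n s = oneKron n s * (oneKron n s)ᵀ := by
  ext p q
  simp [JKron, oneKron, mul_apply, one_apply]

theorem resist_eq (K : Matrix (Fin n × Fin s) (Fin n × Fin s) ℝ) :
    resist K = bdiag K * JKron n s + JKron n s * bdiag K - (2 : ℝ) • K := by
  ext p q
  simp [resist, bdiag, JKron, mul_apply, one_apply, Fintype.sum_prod_type]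

theorem blk_resist (K : Matrix (Fin n × Fin s) (Fin n × Fin s) ℝ) (i j : Fin n) :
    blk (resist K) i j = blk K i i + blk K j j - (2 : ℝ) • blk K i j :=
  rfl

theorem dotProduct_resist_mulVec_of_vecMul_oneKron_eq_zero
    (K : Matrix (Fin n × Fin s) (Fin n × Fin s) ℝ) {x : Fin n × Fin s → ℝ}
    (hx : x ᵥ* oneKron n s = 0) :
    x ⬝ᵥ resist K *ᵥ x = -2 * (x ⬝ᵥ K *ᵥ x) := by
  have hJx : JKron n s *ᵥ x = 0 := by
    rw [JKron_eq_oneKron_mul_transpose, ← mulVec_mulVec, mulVec_transpose, hx, mulVec_zero]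
  have hxJ : x ᵥ* JKron n s = 0 := by
    rw [JKron_eq_oneKron_mul_transpose, ← vecMul_vecMul, hx, zero_vecMul]
  rw [resist_eq, sub_mulVec, add_mulVec, ← mulVec_mulVec, ← mulVec_mulVec, hJx, mulVec_zero,
    zero_add, dotProduct_sub, dotProduct_mulVec, hxJ, zero_dotProduct, smul_mulVec,
    dotProduct_smul, smul_eq_mul]
  ring

theorem dotProduct_resist_mulVec_oneKron (K : Matrix (Fin n × Fin s) (Fin n × Fin s) ℝ)
    (c : Fin s → ℝ) :
    (oneKron n s *ᵥ c) ⬝ᵥ resist K *ᵥ (oneKron n s *ᵥ c) =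
      ∑ i, ∑ j, (blockSingle i c - blockSingle j c) ⬝ᵥ
        K *ᵥ (blockSingle i c - blockSingle j c) := by
  have hswap : ∑ i, ∑ j, c ⬝ᵥ blk K j i *ᵥ c = ∑ i, ∑ j, c ⬝ᵥ blk K i j *ᵥ c := sum_comm
  simp only [oneKron_mulVec, sum_dotProduct, mulVec_sum, dotProduct_sum, sub_dotProduct,
    mulVec_sub, dotProduct_sub, blockSingle_dotProduct_mulVec, blk_resist, sub_mulVec, add_mulVec,
    dotProduct_add, smul_mulVec, dotProduct_smul, smul_eq_mul, sum_add_distrib, sum_sub_distrib,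
    ← mul_sum, hswap]
  ring

end Blocks

section Inertia

variable {n s : ℕ} {K : Matrix (Fin n × Fin s) (Fin n × Fin s) ℝ}

/-- `K` is conditionally positive definite: its quadratic form is positive at every nonzero vector
whose `n` blocks of length `s` sum to `0`. -/
def CondPosDef (K : Matrix (Fin n × Fin s) (Fin n × Fin s) ℝ) : Prop :=
  ∀ x, x ᵥ* oneKron n s = 0 → x ≠ 0 → 0 < x ⬝ᵥ K *ᵥ x

theorem CondPosDef.dotProduct_mulVec_nonneg (hK : CondPosDef K) {x : Fin n × Fin s → ℝ}
    (hx : x ᵥ* oneKron n s = 0) : 0 ≤ x ⬝ᵥ K *ᵥ x := by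
  obtain rfl | hx0 := eq_or_ne x 0
  · simp
  · exact (hK x hx hx0).le

theorem IsMoorePenrose.condPosDef {L : Matrix (Fin n × Fin s) (Fin n × Fin s) ℝ}
    (hLK : IsMoorePenrose L K) (hL : L.PosSemidef)
    (hker : ∀ v, L *ᵥ v = 0 → ∃ c, v = oneKron n s *ᵥ c) : CondPosDef K := by
  intro x hx hx0
  have horth : ∀ v, L *ᵥ v = 0 → x ⬝ᵥ v = 0 := fun v hv => by
    obtain ⟨c, rfl⟩ := hker v hv
    rw [dotProduct_mulVec, hx, zero_dotProduct]
  obtain ⟨y, rfl⟩ := hLK.exists_mulVec_eq_of_orthogonal_ker (by simpa using hL.1) horth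
  exact dotProduct_mulVec_pos_of_mul_mul_self hL hLK.1 hx0

theorem CondPosDef.dotProduct_resist_mulVec_neg (hK : CondPosDef K) {x : Fin n × Fin s → ℝ}
    (hx : x ᵥ* oneKron n s = 0) (hx0 : x ≠ 0) : x ⬝ᵥ resist K *ᵥ x < 0 := by
  rw [dotProduct_resist_mulVec_of_vecMul_oneKron_eq_zero K hx]
  linarith [hK x hx hx0]

theorem CondPosDef.dotProduct_resist_mulVec_pos [Nontrivial (Fin n)] (hK : CondPosDef K)
    {c : Fin s → ℝ} (hc : c ≠ 0) :
    0 < (oneKron n s *ᵥ c) ⬝ᵥ resist K *ᵥ (oneKron n s *ᵥ c) := by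
  have hsum (i j : Fin n) : (blockSingle i c - blockSingle j c) ᵥ* oneKron n s = 0 := by
    rw [sub_vecMul, blockSingle_vecMul_oneKron, blockSingle_vecMul_oneKron, sub_self]
  have hnonneg (i j : Fin n) := hK.dotProduct_mulVec_nonneg (hsum i j)
  obtain ⟨i, j, hij⟩ := exists_pair_ne (Fin n)
  have hne : blockSingle i c - blockSingle j c ≠ 0 := fun h =>
    hc (funext fun a => by simpa [blockSingle, hij] using congrFun h (i, a))
  rw [dotProduct_resist_mulVec_oneKron]
  exact sum_pos' (fun i _ => sum_nonneg fun j _ => hnonneg i j)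
    ⟨i, mem_univ i, sum_pos' (fun j _ => hnonneg i j) ⟨j, mem_univ j, hK _ (hsum i j) hne⟩⟩

theorem CondPosDef.posDef_restrict_range [Nontrivial (Fin n)] (hK : CondPosDef K) :
    ((resist K).toQuadraticForm'.restrict (LinearMap.range (oneKron n s).mulVecLin)).PosDef := by
  rintro ⟨_, c, rfl⟩ hx
  have hc : c ≠ 0 := by
    rintro rfl
    simp at hx
  simpa [toQuadraticForm'_apply] using hK.dotProduct_resist_mulVec_pos hc

theorem CondPosDef.negDef_restrict_ker (hK : CondPosDef K) :
    ((-(resist K).toQuadraticForm').restrict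
      (LinearMap.ker (oneKron n s).vecMulLinear)).PosDef := by
  rintro ⟨x, hx⟩ hx0
  simpa [toQuadraticForm'_apply] using
    hK.dotProduct_resist_mulVec_neg (by simpa using hx) (by simpa using hx0)

theorem resist_inertia_general (hn : 2 ≤ n) (hK : CondPosDef K) (hR : (resist K).IsHermitian) :
    #{p | 0 < hR.eigenvalues p} = s ∧
      #{p | hR.eigenvalues p < 0} = n * s - s ∧
      #{p | hR.eigenvalues p = 0} = 0 := by
  have : Nontrivial (Fin n) := Fin.nontrivial_iff_two_le.2 hn
  have hdim := rank_add_finrank_ker_vecMulLinear (oneKron n s)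
  obtain ⟨hpos, hneg, hzero⟩ := signature_eq_of_definite_subspaces
    hK.posDef_restrict_range hK.negDef_restrict_ker (by simpa [rank] using hdim)
  have hrank : Module.finrank ℝ (LinearMap.range (oneKron n s).mulVecLin) = s := rank_oneKron
  rw [rank_oneKron, Fintype.card_prod, Fintype.card_fin, Fintype.card_fin] at hdim
  rw [← sigPos_eq_card_eigenvalues_pos, ← sigNeg_eq_card_eigenvalues_neg,
    ← finrank_radical_eq_card_eigenvalues_zero, hpos, hneg, hzero]
  omega

end Inertia

/-- The inertia of the resistance matrix `R` is `(s, ns - s, 0)`: it has exactly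
`s` positive eigenvalues, `ns - s` negative eigenvalues and no zero eigenvalue,
counted with multiplicity. -/
theorem resist_inertia
    (n s : ℕ) (hn : 2 ≤ n) (hs : 1 ≤ s)
    (G : SimpleGraph (Fin n)) [DecidableRel G.Adj] (hconn : G.Connected)
    (W : Fin n → Fin n → Matrix (Fin s) (Fin s) ℝ)
    (hWsymm : ∀ i j, W i j = W j i)
    (hWpd : ∀ i j, G.Adj i j → (W i j).PosDef)
    (hPSD : (lap G W).PosSemidef)
    (hrank : (lap G W).rank = n * s - s)
    (hker : ∀ v : Fin n × Fin s → ℝ,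
      lap G W *ᵥ v = 0 ↔ ∃ c : Fin s → ℝ, v = oneKron n s *ᵥ c)
    (Ldag : Matrix (Fin n × Fin s) (Fin n × Fin s) ℝ)
    (hMP : IsMoorePenrose (lap G W) Ldag)
    (R : Matrix (Fin n × Fin s) (Fin n × Fin s) ℝ)
    (hR : R = resist Ldag)
    (hRH : R.IsHermitian) :
    (Finset.univ.filter (fun p => 0 < hRH.eigenvalues p)).card = s ∧
      (Finset.univ.filter (fun p => hRH.eigenvalues p < 0)).card = n * s - s ∧
      (Finset.univ.filter (fun p => hRH.eigenvalues p = 0)).card = 0 := by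
  subst hR
  exact resist_inertia_general hn (hMP.condPosDef hPSD fun v => (hker v).1) hRH
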